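/- arXiv:2601.22096 — 5 statements merged into one kernel-verified Lean document; each statement's English description precedes it below -/
import Mathlib

section
/- Assume the surplus and deficiency profiles are complementary, i.e. p⁺ t * p⁻ t = 0 for all t. Then for every feasible profile S of the single-storage reliability-dispatch problem, ∑_{t : Fin T} min 0 (S (t+1) − S t) = ∑_{t : p⁻ t > 0} (S (t+1) − S t). Consequently, minimizing the unserved energy ∑_{t : p⁻ t > 0} (p⁻ t − (S t − S (t+1))) over feasible profiles is equivalent to minimizing V(S). -/
/-- Feasibility for the single-storage reliability-dispatch problem. -/
def Feasible (T : ℕ) (pp pm : Fin T → ℝ) (S0 Sb xb : ℝ)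
    (S : Fin (T + 1) → ℝ) : Prop :=
  S 0 = S0 ∧ ∀ t : Fin T,
    (0 ≤ S t.succ ∧ S t.succ ≤ Sb) ∧
    |S t.succ - S t.castSucc| ≤ xb ∧
    (-(pm t) ≤ S t.succ - S t.castSucc ∧ S t.succ - S t.castSucc ≤ pp t)

/-- The objective `V(S) = ∑ₜ min 0 (S (t+1) − S t)`. -/
noncomputable def V (T : ℕ) (S : Fin (T + 1) → ℝ) : ℝ :=
  ∑ t : Fin T, min 0 (S t.succ - S t.castSucc)

/-- Under complementarity `p⁺ t * p⁻ t = 0`, the objective equals the sum of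
SoC increments over deficiency periods, and the unserved energy differs from
`V(S)` by the fixed constant `∑_{t : p⁻ t > 0} p⁻ t`. -/
theorem objective_eq_deficiency_sum (T : ℕ) (pp pm : Fin T → ℝ)
    (hpp : ∀ t, 0 ≤ pp t) (hpm : ∀ t, 0 ≤ pm t)
    (hcompl : ∀ t, pp t * pm t = 0)
    (S0 Sb xb : ℝ) (S : Fin (T + 1) → ℝ)
    (hS : Feasible T pp pm S0 Sb xb S) :
    (∑ t : Fin T, min 0 (S t.succ - S t.castSucc)) =
      (∑ t ∈ Finset.univ.filter (fun t : Fin T => 0 < pm t),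
        (S t.succ - S t.castSucc)) ∧
    (∑ t ∈ Finset.univ.filter (fun t : Fin T => 0 < pm t),
        (pm t - (S t.castSucc - S t.succ))) =
      (∑ t ∈ Finset.univ.filter (fun t : Fin T => 0 < pm t), pm t) + V T S := by
  have key : (∑ t : Fin T, min 0 (S t.succ - S t.castSucc)) =
      ∑ t ∈ Finset.univ.filter (fun t : Fin T => 0 < pm t),
        (S t.succ - S t.castSucc) := by
    rw [Finset.sum_filter]
    refine Finset.sum_congr rfl fun t _ => ?_
    obtain ⟨-, -, hlo, hhi⟩ := hS.2 t
    split_ifs with h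
    · -- In a deficiency period the surplus vanishes, so the storage cannot charge.
      have hp : pp t = 0 := (mul_eq_zero.mp (hcompl t)).resolve_right h.ne'
      exact min_eq_right (hhi.trans_eq hp)
    · -- Without deficiency the storage cannot discharge.
      exact min_eq_left (by linarith)
  refine ⟨key, ?_⟩
  rw [V, key, ← Finset.sum_add_distrib]
  exact Finset.sum_congr rfl fun t _ => by ring
end

section
/- (Theorem 1, piecewise linearity in energy capacity.) Fix x̄ ≥ 0 and 0 ≤ S0, and define v(S̄) as the infimum of V(S) over feasible profiles. Then v is piecewise affine on [S0, ∞): there exist finitely many breakpoints S0 = a₀ < a₁ < ⋯ < aₙ and coefficients cᵢ, dᵢ such that v(S̄) = cᵢ·S̄ + dᵢ on each interval [aᵢ, aᵢ₊₁] for i < n and v(S̄) = cₙ·S̄ + dₙ on [aₙ, ∞). -/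
/-- The optimal value at capacity `Sb`. -/
noncomputable def optVal (T : ℕ) (pp pm : Fin T → ℝ) (S0 xb Sb : ℝ) : ℝ :=
  sInf {r : ℝ | ∃ S : Fin (T + 1) → ℝ, Feasible T pp pm S0 Sb xb S ∧ V T S = r}

/-! ### Extreme points of parametric polyhedra -/

/-- The extreme points of the polyhedra `A x ≤ b + s c` are, uniformly in `s`, given by finitely many
affine functions of `s`: one for each set of active constraints that determines the point. -/
lemma extreme_points_affine {m : ℕ} {ι : Type*} [Finite ι]
    (A : (Fin m → ℝ) →ₗ[ℝ] (ι → ℝ)) (b c : ι → ℝ) :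
    ∃ F : Set ((Fin m → ℝ) × (Fin m → ℝ)), F.Finite ∧
      ∀ (s : ℝ), ∀ x ∈ Set.extremePoints ℝ {x | ∀ i, A x i ≤ b i + s * c i},
        ∃ p ∈ F, x = s • p.1 + p.2 := by
  classical
  -- `D I` keeps the coordinates in `I` and sets the others to zero.
  let D : Set ι → ((ι → ℝ) →ₗ[ℝ] (ι → ℝ)) := fun I =>
    LinearMap.pi fun i => if i ∈ I then LinearMap.proj i else 0
  have hD : ∀ I y i, D I y i = if i ∈ I then y i else 0 := by
    intro I y i
    by_cases h : i ∈ I <;> simp [D, h]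
  have hL : ∀ I, ∃ L : (ι → ℝ) →ₗ[ℝ] (Fin m → ℝ),
      LinearMap.ker (D I ∘ₗ A) = ⊥ → L ∘ₗ (D I ∘ₗ A) = LinearMap.id := by
    intro I
    by_cases h : LinearMap.ker (D I ∘ₗ A) = ⊥
    · obtain ⟨L, hL⟩ := LinearMap.exists_leftInverse_of_injective _ h
      exact ⟨L, fun _ => hL⟩
    · exact ⟨0, fun h' => absurd h' h⟩
  choose L hL using hL
  refine ⟨Set.range fun I => (L I (D I c), L I (D I b)), Set.finite_range _, ?_⟩
  intro s x hx
  obtain ⟨hxP, hext⟩ := hx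
  set I : Set ι := {i | A x i = b i + s * c i} with hI
  refine ⟨_, ⟨I, rfl⟩, ?_⟩
  have hker : LinearMap.ker (D I ∘ₗ A) = ⊥ := by
    rw [LinearMap.ker_eq_bot']
    intro w hw
    have hact : ∀ i ∈ I, A w i = 0 := by
      intro i hi
      have := congrFun hw i
      simpa [hD, hi] using this
    -- A kernel direction keeps the active constraints tight, and a small step respects the others.
    have hev : ∀ᶠ ε : ℝ in nhds 0, ∀ i,
        A x i + ε * A w i ≤ b i + s * c i ∧ A x i - ε * A w i ≤ b i + s * c i := by
      rw [Filter.eventually_all]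
      intro i
      by_cases hi : i ∈ I
      · refine Filter.Eventually.of_forall fun ε => ?_
        rw [hact i hi]
        simpa using hxP i
      · have hlt : A x i < b i + s * c i := lt_of_le_of_ne (hxP i) hi
        have h1 : Filter.Tendsto (fun ε : ℝ => A x i + ε * A w i) (nhds 0) (nhds (A x i)) := by
          have : Continuous (fun ε : ℝ => A x i + ε * A w i) := by fun_prop
          simpa using this.tendsto 0
        have h2 : Filter.Tendsto (fun ε : ℝ => A x i - ε * A w i) (nhds 0) (nhds (A x i)) := by
          have : Continuous (fun ε : ℝ => A x i - ε * A w i) := by fun_prop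
          simpa using this.tendsto 0
        filter_upwards [h1.eventually_lt_const hlt, h2.eventually_lt_const hlt] with ε ha hb
        exact ⟨ha.le, hb.le⟩
    obtain ⟨ε, hε, hεpos⟩ :=
      ((hev.filter_mono nhdsWithin_le_nhds).and (self_mem_nhdsWithin (s := Set.Ioi (0 : ℝ)))).exists
    have hεpos : 0 < ε := hεpos
    have h := @hext (x + ε • w) (fun i => by simpa using (hε i).1)
      (x - ε • w) (fun i => by simpa using (hε i).2)
      ⟨1 / 2, 1 / 2, by norm_num, by norm_num, by norm_num, by
        ext k; simp; ring⟩
    have h0 : ε • w = 0 := by simpa using h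
    exact (smul_eq_zero.1 h0).resolve_left hεpos.ne'
  have hDx : D I (A x) = s • D I c + D I b := by
    ext i
    by_cases hi : i ∈ I
    · have : A x i = b i + s * c i := hi
      simp [hD, hi, this, add_comm]
    · simp [hD, hi]
  calc x = (L I ∘ₗ (D I ∘ₗ A)) x := by rw [hL I hker]; rfl
    _ = L I (D I (A x)) := rfl
    _ = _ := by rw [hDx]; simp

/-- A continuous function that is the minimum of a family of linear functionals attains its minimum
over a compact set at an extreme point, where it agrees with one of the functionals. -/
lemma exists_extreme_minimizer {m : ℕ} {κ : Type*} {K : Set (Fin m → ℝ)} (hK : IsCompact K)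
    (hne : K.Nonempty) (f : (Fin m → ℝ) → ℝ) (hf : Continuous f)
    (l : κ → ((Fin m → ℝ) →ₗ[ℝ] ℝ)) (hle : ∀ k x, f x ≤ l k x) (heq : ∀ x, ∃ k, f x = l k x) :
    ∃ x ∈ K.extremePoints ℝ, (∀ y ∈ K, f x ≤ f y) ∧ ∃ k, f x = l k x := by
  obtain ⟨y, hyK, hy⟩ := hK.exists_isMinOn hne hf.continuousOn
  have hy : ∀ z ∈ K, f y ≤ f z := fun z hz => hy hz
  obtain ⟨k, hk⟩ := heq y
  -- `y` minimizes the linear functional `l k` as well, so the minimizers of `l k` form a face.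
  let g : StrongDual ℝ (Fin m → ℝ) := -(LinearMap.toContinuousLinearMap (l k))
  have hg : ∀ z, g z = -(l k z) := fun z => rfl
  have hexp : IsExposed ℝ K (g.toExposed K) := ContinuousLinearMap.toExposed.isExposed
  have hyg : y ∈ g.toExposed K := by
    refine ⟨hyK, fun z hz => ?_⟩
    rw [hg, hg]
    linarith [hy z hz, hle k z]
  obtain ⟨x, hx⟩ := (hexp.isCompact hK).extremePoints_nonempty ⟨y, hyg⟩
  have hxK := hexp.isExtreme.extremePoints_subset_extremePoints hx
  have hxy := hx.1.2 y hyK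
  rw [hg, hg] at hxy
  exact ⟨x, hxK, fun z hz => by linarith [hle k x, hy z hz], k,
    by linarith [hle k x, hy x hxK.1]⟩

/-! ### The dispatch polyhedron and its objective -/

lemma feasible_const {T : ℕ} {pp pm : Fin T → ℝ} (hpp : ∀ t, 0 ≤ pp t) (hpm : ∀ t, 0 ≤ pm t)
    {S0 xb Sb : ℝ} (hS0 : 0 ≤ S0) (hxb : 0 ≤ xb) (hSb : S0 ≤ Sb) :
    Feasible T pp pm S0 Sb xb (fun _ => S0) := by
  refine ⟨rfl, fun t => ⟨⟨hS0, hSb⟩, ?_, ?_, ?_⟩⟩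
  · simpa using hxb
  · simpa using hpm t
  · simpa using hpp t

lemma feasible_mem_Icc {T : ℕ} {pp pm : Fin T → ℝ} {S0 xb Sb : ℝ} (hS0 : 0 ≤ S0) (hSb : S0 ≤ Sb)
    {S : Fin (T + 1) → ℝ} (h : Feasible T pp pm S0 Sb xb S) :
    S ∈ Set.Icc (fun _ => (0 : ℝ)) (fun _ => Sb) := by
  have key : ∀ t, 0 ≤ S t ∧ S t ≤ Sb := by
    intro t
    refine Fin.cases ?_ (fun t => (h.2 t).1) t
    rw [h.1]
    exact ⟨hS0, hSb⟩
  exact ⟨fun t => (key t).1, fun t => (key t).2⟩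

/-- Feasibility is a system of finitely many linear inequalities with right-hand side affine in the
capacity. -/
lemma feasible_polyhedron (T : ℕ) (pp pm : Fin T → ℝ) (S0 xb : ℝ) :
    ∃ (A : (Fin (T + 1) → ℝ) →ₗ[ℝ] (Bool ⊕ Fin T × Fin 4 → ℝ)) (b c : Bool ⊕ Fin T × Fin 4 → ℝ),
      ∀ Sb, {S | Feasible T pp pm S0 Sb xb S} = {S | ∀ i, A S i ≤ b i + Sb * c i} := by
  let pr : Fin (T + 1) → ((Fin (T + 1) → ℝ) →ₗ[ℝ] ℝ) := fun i => LinearMap.proj i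
  -- The two Boolean rows encode `S 0 = S0`; the power and profile bounds are merged by `min`.
  refine ⟨LinearMap.pi (Sum.elim (fun q => if q then pr 0 else -pr 0)
      (fun q => ![-pr q.1.succ, pr q.1.succ, pr q.1.succ - pr q.1.castSucc,
        pr q.1.castSucc - pr q.1.succ] q.2)),
    Sum.elim (fun q => if q then S0 else -S0)
      (fun q => ![0, 0, min xb (pp q.1), min xb (pm q.1)] q.2),
    Sum.elim (fun _ => 0) (fun q => ![0, 1, 0, 0] q.2), fun Sb => ?_⟩
  ext S
  simp only [Set.mem_ofPred_eq, Feasible, Sum.forall, Bool.forall_bool, Prod.forall,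
    Fin.forall_fin_succ (n := 3), Fin.forall_fin_succ (n := 2), Fin.forall_fin_succ (n := 1),
    Fin.forall_fin_one]
  simp [pr, abs_le]
  constructor
  · rintro ⟨h0, h⟩
    refine ⟨⟨h0.ge, h0.le⟩, fun t => ?_⟩
    obtain ⟨⟨h1, h2⟩, ⟨h3, h4⟩, h5, h6⟩ := h t
    refine ⟨?_, ?_, ⟨?_, ?_⟩, ?_, ?_⟩ <;> linarith
  · rintro ⟨⟨ha, hb⟩, h⟩
    refine ⟨le_antisymm hb ha, fun t => ?_⟩
    obtain ⟨h1, h2, ⟨h3, h4⟩, h5, h6⟩ := h t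
    refine ⟨⟨?_, ?_⟩, ⟨?_, ?_⟩, ?_, ?_⟩ <;> linarith

lemma continuous_V (T : ℕ) : Continuous (V T) := by
  unfold V
  fun_prop

/-- The linear functional obtained from `V` by keeping exactly the increments in `σ`. -/
noncomputable def partialSum (T : ℕ) (σ : Finset (Fin T)) : (Fin (T + 1) → ℝ) →ₗ[ℝ] ℝ :=
  ∑ t ∈ σ, ((LinearMap.proj t.succ : (Fin (T + 1) → ℝ) →ₗ[ℝ] ℝ) - LinearMap.proj t.castSucc)

lemma partialSum_apply (T : ℕ) (σ : Finset (Fin T)) (S : Fin (T + 1) → ℝ) :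
    partialSum T σ S = ∑ t ∈ σ, (S t.succ - S t.castSucc) := by
  simp [partialSum, LinearMap.sum_apply]

lemma V_le_partialSum (T : ℕ) (σ : Finset (Fin T)) (S : Fin (T + 1) → ℝ) :
    V T S ≤ partialSum T σ S := by
  classical
  rw [partialSum_apply, V, ← Finset.sum_filter_add_sum_filter_not Finset.univ (· ∈ σ),
    Finset.filter_univ_mem]
  have h1 : ∑ t ∈ σ, min 0 (S t.succ - S t.castSucc) ≤ ∑ t ∈ σ, (S t.succ - S t.castSucc) :=
    Finset.sum_le_sum fun t _ => min_le_right _ _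
  have h2 : ∑ t with t ∉ σ, min 0 (S t.succ - S t.castSucc) ≤ 0 :=
    Finset.sum_nonpos fun t _ => min_le_left _ _
  linarith

lemma exists_V_eq_partialSum (T : ℕ) (S : Fin (T + 1) → ℝ) : ∃ σ, V T S = partialSum T σ S := by
  classical
  refine ⟨Finset.univ.filter fun t => S t.succ - S t.castSucc ≤ 0, ?_⟩
  rw [partialSum_apply, V, Finset.sum_filter]
  refine Finset.sum_congr rfl fun t _ => ?_
  split_ifs with h
  · exact min_eq_right h
  · exact min_eq_left (le_of_not_ge h)

/-- The optimal value is attained, and it always agrees with one of finitely many affine functions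
of the capacity. A pair `p` stands for the function `s ↦ p.1 * s + p.2`. -/
lemma optimal_value_selection (T : ℕ) (pp pm : Fin T → ℝ)
    (hpp : ∀ t, 0 ≤ pp t) (hpm : ∀ t, 0 ≤ pm t) (S0 xb : ℝ) (hS0 : 0 ≤ S0) (hxb : 0 ≤ xb) :
    ∃ F : Finset (ℝ × ℝ), ∀ Sb, S0 ≤ Sb →
      (∃ S, Feasible T pp pm S0 Sb xb S ∧ V T S = optVal T pp pm S0 xb Sb ∧
        ∀ S', Feasible T pp pm S0 Sb xb S' → V T S ≤ V T S') ∧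
      ∃ p ∈ F, optVal T pp pm S0 xb Sb = p.1 * Sb + p.2 := by
  classical
  obtain ⟨A, b, c, hA⟩ := feasible_polyhedron T pp pm S0 xb
  obtain ⟨F, hF, hFx⟩ := extreme_points_affine A b c
  refine ⟨(hF.toFinset ×ˢ (Finset.univ : Finset (Finset (Fin T)))).image
    (fun q => (partialSum T q.2 q.1.1, partialSum T q.2 q.1.2)), fun Sb hSb => ?_⟩
  have hclosed : IsClosed {S | Feasible T pp pm S0 Sb xb S} := by
    rw [hA Sb, Set.ofPred_forall]
    refine isClosed_iInter fun i => isClosed_le ?_ continuous_const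
    exact (continuous_apply i).comp A.continuous_of_finiteDimensional
  have hK : IsCompact {S | Feasible T pp pm S0 Sb xb S} :=
    isCompact_Icc.of_isClosed_subset hclosed fun S hS => feasible_mem_Icc hS0 hSb hS
  obtain ⟨S, hSext, hSmin, σ, hσ⟩ := exists_extreme_minimizer hK
    ⟨fun _ => S0, feasible_const hpp hpm hS0 hxb hSb⟩ (V T) (continuous_V T) (partialSum T)
    (V_le_partialSum T) (exists_V_eq_partialSum T)
  have hval : V T S = optVal T pp pm S0 xb Sb := by
    have hleast : IsLeast {r : ℝ | ∃ S : Fin (T + 1) → ℝ,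
        Feasible T pp pm S0 Sb xb S ∧ V T S = r} (V T S) := by
      refine ⟨⟨S, hSext.1, rfl⟩, ?_⟩
      rintro _ ⟨S', hS', rfl⟩
      exact hSmin S' hS'
    exact hleast.csInf_eq.symm
  refine ⟨⟨S, hSext.1, hval, hSmin⟩, ?_⟩
  rw [hA Sb] at hSext
  obtain ⟨p, hpF, hp⟩ := hFx Sb S hSext
  refine ⟨_, Finset.mem_image_of_mem _ (a := (p, σ)) (Finset.mem_product.2
    ⟨hF.mem_toFinset.2 hpF, Finset.mem_univ σ⟩), ?_⟩
  rw [← hval, hσ, hp]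
  simp [mul_comm]

/-! ### Continuity in the capacity -/

/-- Truncating a feasible profile at a capacity `x ≥ S0` preserves feasibility: the truncated
increments lie between zero and the original ones. -/
lemma feasible_truncate {T : ℕ} {pp pm : Fin T → ℝ}
    (hpp : ∀ t, 0 ≤ pp t) (hpm : ∀ t, 0 ≤ pm t) {S0 xb x y : ℝ} (hS0 : 0 ≤ S0) (hx : S0 ≤ x)
    {S : Fin (T + 1) → ℝ} (h : Feasible T pp pm S0 y xb S) :
    Feasible T pp pm S0 x xb (fun t => min (S t) x) := by
  refine ⟨by simp [h.1, hx], fun t => ?_⟩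
  obtain ⟨⟨h1, h2⟩, h3, h4, h5⟩ := h.2 t
  rw [abs_le] at h3
  have := hpp t
  have := hpm t
  simp only [abs_le]
  refine ⟨⟨le_min h1 (hS0.trans hx), min_le_right _ _⟩, ⟨?_, ?_⟩, ?_, ?_⟩ <;>
    rcases min_cases (S t.succ) x with ⟨ha, ha'⟩ | ⟨ha, ha'⟩ <;>
    rcases min_cases (S t.castSucc) x with ⟨hb, hb'⟩ | ⟨hb, hb'⟩ <;>
    rw [ha, hb] <;> linarith

lemma optimal_value_lipschitz (T : ℕ) (pp pm : Fin T → ℝ)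
    (hpp : ∀ t, 0 ≤ pp t) (hpm : ∀ t, 0 ≤ pm t) (S0 xb : ℝ) (hS0 : 0 ≤ S0) (hxb : 0 ≤ xb)
    {x y : ℝ} (hx : S0 ≤ x) (hy : S0 ≤ y) :
    optVal T pp pm S0 xb x ≤ optVal T pp pm S0 xb y + 2 * T * |x - y| := by
  obtain ⟨F, hF⟩ := optimal_value_selection T pp pm hpp hpm S0 xb hS0 hxb
  obtain ⟨⟨S, hS, hSv, -⟩, -⟩ := hF y hy
  obtain ⟨⟨S', -, hSv', hmin⟩, -⟩ := hF x hx
  have h1 := hmin _ (feasible_truncate hpp hpm hS0 hx hS)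
  rw [← hSv, ← hSv']
  refine h1.trans ?_
  have hbd := feasible_mem_Icc hS0 hy hS
  have hclose : ∀ t, |min (S t) x - S t| ≤ |x - y| := by
    intro t
    have h2 : S t ≤ y := hbd.2 t
    rcases min_cases (S t) x with ⟨ha, ha'⟩ | ⟨ha, ha'⟩
    · simp [ha]
    · rw [ha, abs_of_neg (by linarith), abs_of_neg (by linarith)]
      linarith
  have hterm : ∀ t : Fin T, min 0 (min (S t.succ) x - min (S t.castSucc) x) ≤
      min 0 (S t.succ - S t.castSucc) + 2 * |x - y| := by
    intro t
    have ha := abs_le.1 (hclose t.succ)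
    have hb := abs_le.1 (hclose t.castSucc)
    have hc := abs_nonneg (x - y)
    rw [← min_add_add_right]
    exact min_le_min (by linarith) (by linarith)
  calc V T (fun t => min (S t) x)
      ≤ ∑ t : Fin T, (min 0 (S t.succ - S t.castSucc) + 2 * |x - y|) :=
        Finset.sum_le_sum fun t _ => hterm t
    _ = V T S + 2 * T * |x - y| := by
        rw [Finset.sum_add_distrib]
        simp [V]
        ring

/-! ### Continuous selections from finitely many affine functions -/

/-- On a connected set where distinct members of `F` never cross, a continuous selection from `F`
is a single member of `F`, and it remains so on the closure. -/
lemma affine_of_no_crossing {U : Set ℝ} (hU : IsPreconnected U) (hne : U.Nonempty)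
    (g : ℝ → ℝ) (hg : Continuous g) (F : Finset (ℝ × ℝ))
    (hsel : ∀ x ∈ U, ∃ p ∈ F, g x = p.1 * x + p.2)
    (hcross : ∀ x ∈ U, ∀ p ∈ F, ∀ q ∈ F, p.1 * x + p.2 = q.1 * x + q.2 → p = q) :
    ∃ c d : ℝ, ∀ x ∈ closure U, g x = c * x + d := by
  classical
  obtain ⟨x₀, hx₀⟩ := hne
  obtain ⟨p, hpF, hp⟩ := hsel x₀ hx₀
  have hcl : ∀ q : ℝ × ℝ, IsClosed {x | g x = q.1 * x + q.2} := fun q =>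
    isClosed_eq hg (by fun_prop)
  refine ⟨p.1, p.2, fun x hx => closure_minimal (t := {x | g x = p.1 * x + p.2}) ?_ (hcl p) hx⟩
  intro y hy
  by_contra hyp
  have hcl' : IsClosed (⋃ q ∈ F.erase p, {x | g x = q.1 * x + q.2}) :=
    (F.erase p).finite_toSet.isClosed_biUnion fun q _ => hcl q
  have hmem : ∀ z ∈ U, g z ≠ p.1 * z + p.2 →
      z ∈ ⋃ q ∈ F.erase p, {x | g x = q.1 * x + q.2} := by
    intro z hz hzp
    obtain ⟨q, hqF, hq⟩ := hsel z hz
    refine Set.mem_biUnion (x := q) (Finset.mem_coe.2 (Finset.mem_erase.2 ⟨?_, hqF⟩)) hq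
    rintro rfl
    exact hzp hq
  obtain ⟨z, hzU, hzp, hzq⟩ := isPreconnected_closed_iff.1 hU _ _ (hcl p) hcl'
    (fun z hz => by
      by_cases h : g z = p.1 * z + p.2
      · exact Or.inl h
      · exact Or.inr (hmem z hz h))
    ⟨x₀, hx₀, hp⟩ ⟨y, hy, hmem y hy hyp⟩
  simp only [Set.mem_iUnion, Finset.mem_erase] at hzq
  obtain ⟨q, ⟨hqp, hqF⟩, hq⟩ := hzq
  exact hqp (hcross z hzU q hqF p hpF (hq.symm.trans hzp))

/-- A continuous selection from finitely many affine functions is piecewise affine. -/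
lemma piecewise_of_selection (g : ℝ → ℝ) (hg : Continuous g) (F : Finset (ℝ × ℝ)) (s : ℝ)
    (hsel : ∀ x, s ≤ x → ∃ p ∈ F, g x = p.1 * x + p.2) :
    ∃ (n : ℕ) (a c d : Fin (n + 1) → ℝ), a 0 = s ∧ StrictMono a ∧
      (∀ i : Fin n, ∀ x ∈ Set.Icc (a i.castSucc) (a i.succ),
        g x = c i.castSucc * x + d i.castSucc) ∧
      (∀ x ∈ Set.Ici (a (Fin.last n)), g x = c (Fin.last n) * x + d (Fin.last n)) := by
  classical
  -- The graphs of `p` and `q` cross at `(q.2 - p.2) / (p.1 - q.1)`; for parallel graphs this is the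
  -- junk value `0`, a harmless additional breakpoint.
  let B : Finset ℝ := insert s
    (((F ×ˢ F).image fun r => (r.2.2 - r.1.2) / (r.1.1 - r.2.1)).filter fun x => s < x)
  have hsB : s ∈ B := Finset.mem_insert_self _ _
  have hBle : ∀ x ∈ B, s ≤ x := by
    intro x hx
    rcases Finset.mem_insert.1 hx with rfl | hx
    · exact le_rfl
    · exact (Finset.mem_filter.1 hx).2.le
  have hcross : ∀ x, s < x → x ∉ B → ∀ p ∈ F, ∀ q ∈ F,
      p.1 * x + p.2 = q.1 * x + q.2 → p = q := by
    intro x hsx hxB p hp q hq h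
    by_cases h1 : p.1 = q.1
    · refine Prod.ext h1 ?_
      rw [h1] at h
      linarith
    · refine absurd (Finset.mem_insert_of_mem (Finset.mem_filter.2
        ⟨Finset.mem_image.2 ⟨(p, q), Finset.mem_product.2 ⟨hp, hq⟩, ?_⟩, hsx⟩)) hxB
      have h2 : p.1 - q.1 ≠ 0 := sub_ne_zero.2 h1
      rw [div_eq_iff h2]
      linarith
  obtain ⟨n, hn⟩ : ∃ n, B.card = n + 1 :=
    Nat.exists_eq_succ_of_ne_zero (Finset.card_pos.2 ⟨s, hsB⟩).ne'
  let a : Fin (n + 1) → ℝ := B.orderEmbOfFin hn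
  have hmono : StrictMono a := (B.orderEmbOfFin hn).strictMono
  have haB : ∀ i, a i ∈ B := fun i => B.orderEmbOfFin_mem hn i
  have hBa : ∀ x ∈ B, ∃ i, a i = x := by
    intro x hx
    have : x ∈ Set.range (B.orderEmbOfFin hn) := by
      rw [Finset.range_orderEmbOfFin]
      exact hx
    exact this
  have ha0 : a 0 = s := by
    obtain ⟨i, hi⟩ := hBa s hsB
    exact le_antisymm (hi ▸ hmono.monotone (Fin.zero_le i)) (hBle _ (haB 0))
  have hpiece : ∀ U : Set ℝ, IsPreconnected U → U.Nonempty → (∀ x ∈ U, s < x ∧ x ∉ B) →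
      ∃ c d : ℝ, ∀ x ∈ closure U, g x = c * x + d := fun U hU hne h =>
    affine_of_no_crossing hU hne g hg F (fun x hx => hsel x (h x hx).1.le)
      fun x hx => hcross x (h x hx).1 (h x hx).2
  have hmid : ∀ i : Fin n, ∃ c d : ℝ, ∀ x ∈ Set.Icc (a i.castSucc) (a i.succ),
      g x = c * x + d := by
    intro i
    have hlt : a i.castSucc < a i.succ := hmono i.castSucc_lt_succ
    rw [← closure_Ioo hlt.ne]
    refine hpiece _ isPreconnected_Ioo (Set.nonempty_Ioo.2 hlt) fun x hx =>
      ⟨(hBle _ (haB _)).trans_lt hx.1, fun hxB => ?_⟩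
    obtain ⟨k, rfl⟩ := hBa x hxB
    have h1 := hmono.lt_iff_lt.1 hx.1
    have h2 := hmono.lt_iff_lt.1 hx.2
    simp only [Fin.lt_def, Fin.val_castSucc, Fin.val_succ] at h1 h2
    omega
  have hlast : ∃ c d : ℝ, ∀ x ∈ Set.Ici (a (Fin.last n)), g x = c * x + d := by
    rw [← closure_Ioi]
    refine hpiece _ isPreconnected_Ioi Set.nonempty_Ioi fun x hx =>
      ⟨(hBle _ (haB _)).trans_lt hx, fun hxB => ?_⟩
    obtain ⟨k, rfl⟩ := hBa x hxB
    exact absurd (hmono.monotone (Fin.le_last k)) (not_le.2 hx)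
  choose c d hcd using hmid
  obtain ⟨c', d', hcd'⟩ := hlast
  refine ⟨n, a, Fin.snoc c c', Fin.snoc d d', ha0, hmono, fun i x hx => ?_, fun x hx => ?_⟩
  · simpa using hcd i x hx
  · simpa using hcd' x hx

/-- Theorem 1 (piecewise linearity in energy capacity): the optimal value
`v(S̄)` is piecewise affine on `[S0, ∞)`. -/
theorem optimalValue_piecewise_affine_energy (T : ℕ) (pp pm : Fin T → ℝ)
    (hpp : ∀ t, 0 ≤ pp t) (hpm : ∀ t, 0 ≤ pm t)
    (S0 xb : ℝ) (hS0 : 0 ≤ S0) (hxb : 0 ≤ xb) :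
    ∃ (n : ℕ) (a c d : Fin (n + 1) → ℝ),
      a 0 = S0 ∧ StrictMono a ∧
      (∀ i : Fin n, ∀ Sb ∈ Set.Icc (a i.castSucc) (a i.succ),
        sInf {r : ℝ | ∃ S : Fin (T + 1) → ℝ,
            Feasible T pp pm S0 Sb xb S ∧ V T S = r} =
          c i.castSucc * Sb + d i.castSucc) ∧
      (∀ Sb ∈ Set.Ici (a (Fin.last n)),
        sInf {r : ℝ | ∃ S : Fin (T + 1) → ℝ,
            Feasible T pp pm S0 Sb xb S ∧ V T S = r} =
          c (Fin.last n) * Sb + d (Fin.last n)) := by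
  obtain ⟨F, hF⟩ := optimal_value_selection T pp pm hpp hpm S0 xb hS0 hxb
  -- Freezing the capacity below `S0` makes the optimal value continuous on all of `ℝ`.
  let g : ℝ → ℝ := fun x => optVal T pp pm S0 xb (max S0 x)
  have hgx : ∀ x, S0 ≤ x → g x = optVal T pp pm S0 xb x := fun x hx => by
    simp only [g, max_eq_right hx]
  have hg : Continuous g := by
    refine (LipschitzWith.of_le_add_mul (2 * T : NNReal) fun x y => ?_).continuous
    refine (optimal_value_lipschitz T pp pm hpp hpm S0 xb hS0 hxb
      (le_max_left S0 x) (le_max_left S0 y)).trans ?_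
    have hmax : |max S0 x - max S0 y| ≤ |x - y| := by
      simpa using abs_max_sub_max_le_max S0 x S0 y
    rw [Real.dist_eq]
    push_cast
    gcongr
  obtain ⟨n, a, c, d, ha0, hmono, hmid, hlast⟩ := piecewise_of_selection g hg F S0
    fun x hx => by rw [hgx x hx]; exact (hF x hx).2
  have hge : ∀ i, S0 ≤ a i := fun i => ha0 ▸ hmono.monotone (Fin.zero_le i)
  refine ⟨n, a, c, d, ha0, hmono, fun i x hx => ?_, fun x hx => ?_⟩
  · exact (hgx x ((hge _).trans hx.1)).symm.trans (hmid i x hx)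
  · exact (hgx x ((hge _).trans hx)).symm.trans (hlast x hx)
end

section
/- (Theorem 1, continuity in energy capacity.) Fix x̄ ≥ 0 and 0 ≤ S0, and define v(S̄) as the infimum of V(S) over feasible profiles. Then v is continuous on [S0, ∞); hence the system EUE, equal to ∑_t p⁻ t + v(S̄), is a continuous function of the energy capacity. -/
/-- Witnessed by the profile `S` truncated at the capacity `a`. -/
lemma exists_feasible_V_le {T : ℕ} {pp pm : Fin T → ℝ}
    (hpp : ∀ t, 0 ≤ pp t) (hpm : ∀ t, 0 ≤ pm t)
    {S0 xb a b : ℝ} (hS0 : 0 ≤ S0) (ha : S0 ≤ a) (hb : S0 ≤ b)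
    {S : Fin (T + 1) → ℝ} (hS : Feasible T pp pm S0 b xb S) :
    ∃ S', Feasible T pp pm S0 a xb S' ∧ V T S' ≤ V T S + T * |a - b| := by
  obtain ⟨h0, h⟩ := hS
  have hle : ∀ i, S i ≤ b := by
    intro i
    cases i using Fin.cases with
    | zero => rw [h0]; exact hb
    | succ t => exact (h t).1.2
  refine ⟨fun i => min (S i) a, ⟨by simp [h0, ha], fun t => ?_⟩, ?_⟩
  · obtain ⟨⟨h1, -⟩, h3, h4, h5⟩ := h t
    have hp := hpp t
    have hm := hpm t
    rw [abs_le] at h3 ⊢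
    dsimp only
    rcases min_cases (S t.succ) a with ⟨e1, _⟩ | ⟨e1, _⟩ <;>
      rcases min_cases (S t.castSucc) a with ⟨e2, _⟩ | ⟨e2, _⟩ <;>
      rw [e1, e2] <;> refine ⟨⟨?_, ?_⟩, ⟨?_, ?_⟩, ?_, ?_⟩ <;> linarith
  · have key : ∀ t : Fin T, min 0 (min (S t.succ) a - min (S t.castSucc) a) ≤
        min 0 (S t.succ - S t.castSucc) + |a - b| := by
      intro t
      have hb' := hle t.castSucc
      have hn := abs_nonneg (a - b)
      have hn' := neg_abs_le (a - b)
      have h1 : min (S t.succ) a ≤ S t.succ := min_le_left _ _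
      have h2 : S t.castSucc - |a - b| ≤ min (S t.castSucc) a :=
        le_min (by linarith) (by linarith)
      rw [← min_add_add_right]
      exact min_le_min (by linarith) (by linarith)
    calc V T (fun i => min (S i) a)
        ≤ ∑ t : Fin T, (min 0 (S t.succ - S t.castSucc) + |a - b|) :=
          Finset.sum_le_sum fun t _ => key t
      _ = V T S + T * |a - b| := by simp [V, Finset.sum_add_distrib]

lemma neg_sum_le_V {T : ℕ} {pp pm : Fin T → ℝ} (hpm : ∀ t, 0 ≤ pm t) {S0 b xb : ℝ}
    {S : Fin (T + 1) → ℝ} (hS : Feasible T pp pm S0 b xb S) : -∑ t, pm t ≤ V T S := by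
  rw [← Finset.sum_neg_distrib]
  exact Finset.sum_le_sum fun t _ => le_min (by linarith [hpm t]) (hS.2 t).2.2.1

/-- Theorem 1 (continuity in energy capacity): the optimal value `v(S̄)` is
continuous on `[S0, ∞)`, hence the EUE `∑ₜ p⁻ t + v(S̄)` is a continuous
function of the energy capacity. -/
theorem optimalValue_continuousOn_energy (T : ℕ) (pp pm : Fin T → ℝ)
    (hpp : ∀ t, 0 ≤ pp t) (hpm : ∀ t, 0 ≤ pm t)
    (S0 xb : ℝ) (hS0 : 0 ≤ S0) (hxb : 0 ≤ xb) :
    ContinuousOn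
      (fun Sb => sInf {r : ℝ | ∃ S : Fin (T + 1) → ℝ,
        Feasible T pp pm S0 Sb xb S ∧ V T S = r})
      (Set.Ici S0) ∧
    ContinuousOn
      (fun Sb => (∑ t : Fin T, pm t) +
        sInf {r : ℝ | ∃ S : Fin (T + 1) → ℝ,
          Feasible T pp pm S0 Sb xb S ∧ V T S = r})
      (Set.Ici S0) := by
  have hcont : ContinuousOn
      (fun Sb => sInf {r : ℝ | ∃ S : Fin (T + 1) → ℝ,
        Feasible T pp pm S0 Sb xb S ∧ V T S = r})
      (Set.Ici S0) := by
    refine (LipschitzOnWith.of_le_add_mul (T : NNReal) fun a ha b hb => ?_).continuousOn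
    rw [Set.mem_Ici] at ha hb
    rw [Real.dist_eq, NNReal.coe_natCast, ← sub_le_iff_le_add]
    -- The constant profile `S0` shows that the value set for `b` is nonempty.
    refine le_csInf ⟨_, fun _ => S0, ⟨rfl, fun t => ?_⟩, rfl⟩ ?_
    · simp [hS0, hb, hxb, hpp t, hpm t]
    · rintro r ⟨S, hS, rfl⟩
      obtain ⟨S', hS', hV⟩ := exists_feasible_V_le hpp hpm hS0 ha hb hS
      rw [sub_le_iff_le_add]
      refine le_trans (csInf_le ⟨-∑ t, pm t, ?_⟩ ⟨S', hS', rfl⟩) hV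
      rintro _ ⟨S'', hS'', rfl⟩
      exact neg_sum_le_V hpm hS''
  exact ⟨hcont, continuousOn_const.add hcont⟩
end

section
/- (Full initial state of charge, Section V-B.) Fix x̄ ≥ 0 and replace the initial condition S 0 = S0 by S 0 = S̄ (the storage starts fully charged). Define v(S̄) as the infimum of V(S) over profiles satisfying S 0 = S̄, 0 ≤ S (t+1) ≤ S̄, |S (t+1) − S t| ≤ x̄, and −p⁻ t ≤ S (t+1) − S t ≤ p⁺ t for all t. Then v is antitone on [0, ∞); in particular the non-negativity of the storage MRI with respect to energy capacity remains valid when the initial SoC equals the full energy capacity. -/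
/-!
For `0 ≤ A ≤ B`, translating a profile by `B - A` maps the feasible set for capacity `A` into the
one for capacity `B` and preserves the objective, which depends on increments only. So the set of
attained values grows with the capacity. Its infimum then decreases, since the set of values is
nonempty (idle storage) and bounded below by `-∑ₜ p⁻ t`, so that no junk value of `sInf` occurs.
-/

/-- Feasibility when the storage starts fully charged: `S 0 = S̄` and, for all
`t : Fin T`, `0 ≤ S (t+1) ≤ S̄`, `|S (t+1) − S t| ≤ x̄`, and
`−p⁻ t ≤ S (t+1) − S t ≤ p⁺ t`. -/
def FeasibleFull (T : ℕ) (pp pm : Fin T → ℝ) (Sb xb : ℝ)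
    (S : Fin (T + 1) → ℝ) : Prop :=
  S 0 = Sb ∧ ∀ t : Fin T,
    (0 ≤ S t.succ ∧ S t.succ ≤ Sb) ∧
    |S t.succ - S t.castSucc| ≤ xb ∧
    (-(pm t) ≤ S t.succ - S t.castSucc ∧ S t.succ - S t.castSucc ≤ pp t)

/-- Section V-B (full initial state of charge): with `S 0 = S̄`, the optimal
value `v(S̄)` is antitone on `[0, ∞)`; the non-negativity of the storage MRI
with respect to energy capacity remains valid. -/
theorem optimalValue_antitone_energy_fullSoC (T : ℕ) (pp pm : Fin T → ℝ)
    (hpp : ∀ t, 0 ≤ pp t) (hpm : ∀ t, 0 ≤ pm t)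
    (xb : ℝ) (hxb : 0 ≤ xb) :
    AntitoneOn
      (fun Sb => sInf {r : ℝ | ∃ S : Fin (T + 1) → ℝ,
        FeasibleFull T pp pm Sb xb S ∧ V T S = r})
      (Set.Ici (0 : ℝ)) := by
  intro A hA B _ hAB
  rw [Set.mem_Ici] at hA
  refine csInf_le_csInf ⟨∑ t, -(pm t), ?_⟩ ?_ ?_
  · rintro _ ⟨S, ⟨_, hS⟩, rfl⟩
    exact Finset.sum_le_sum fun t _ =>
      le_min (neg_nonpos.mpr (hpm t)) (hS t).2.2.1
  · -- The idle storage, which stays full throughout, is feasible.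
    exact ⟨_, fun _ => A, ⟨rfl, fun t => by simp [hA, hxb, hpp t, hpm t]⟩, rfl⟩
  · -- Raising a profile for capacity `A` by `B - A` makes it feasible for capacity `B`;
    -- all increments, hence the objective, are unchanged.
    rintro _ ⟨S, ⟨h0, hS⟩, rfl⟩
    refine ⟨fun i => S i + (B - A), ⟨by simp [h0], fun t => ?_⟩, by simp [V]⟩
    obtain ⟨⟨h1, h2⟩, h3⟩ := hS t
    simp only [add_sub_add_right_eq_sub]
    exact ⟨⟨by linarith, by linarith⟩, h3⟩
end

section
/- (Multi-storage objective equivalence.) Assume the surplus and deficiency profiles are complementary, i.e. p⁺ t * p⁻ t = 0 for all t. Then for every feasible family S of the multi-storage reliability-dispatch problem, ∑_{t : Fin T} min 0 (∑_i (S i (t+1) − S i t)) = ∑_{t : p⁻ t > 0} ∑_i (S i (t+1) − S i t); hence minimizing the total unserved energy ∑_{t : p⁻ t > 0} (p⁻ t − ∑_i (S i t − S i (t+1))) over feasible families is equivalent to minimizing V(S). -/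
/-!
By complementarity, a period with `p⁻ t > 0` has `p⁺ t = 0`, so the aggregate constraint makes the
aggregate increment nonpositive and `min 0` leaves it unchanged. A period with `p⁻ t = 0` has a
nonnegative aggregate increment, so `min 0` sends it to `0`. This is the first identity; the second
follows from it termwise.
-/

/-- Feasibility for the multi-storage reliability-dispatch problem: for every
device `i`, `S i 0 = S0 i`, `0 ≤ S i (t+1) ≤ S̄ i`, `|S i (t+1) − S i t| ≤ x̄ i`,
`−p⁻ t ≤ S i (t+1) − S i t ≤ p⁺ t` (no cross-charging), together with the
aggregate constraint `−p⁻ t ≤ ∑ᵢ (S i (t+1) − S i t) ≤ p⁺ t`. -/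
def FeasibleM (T N : ℕ) (pp pm : Fin T → ℝ) (S0 Sb xb : Fin N → ℝ)
    (S : Fin N → Fin (T + 1) → ℝ) : Prop :=
  (∀ i, S i 0 = S0 i) ∧
  (∀ i, ∀ t : Fin T,
    (0 ≤ S i t.succ ∧ S i t.succ ≤ Sb i) ∧
    |S i t.succ - S i t.castSucc| ≤ xb i ∧
    (-(pm t) ≤ S i t.succ - S i t.castSucc ∧
      S i t.succ - S i t.castSucc ≤ pp t)) ∧
  (∀ t : Fin T,
    -(pm t) ≤ ∑ i, (S i t.succ - S i t.castSucc) ∧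
    ∑ i, (S i t.succ - S i t.castSucc) ≤ pp t)

/-- The objective `V(S) = ∑ₜ min 0 (∑ᵢ (S i (t+1) − S i t))`. -/
noncomputable def VM (T N : ℕ) (S : Fin N → Fin (T + 1) → ℝ) : ℝ :=
  ∑ t : Fin T, min 0 (∑ i, (S i t.succ - S i t.castSucc))

/-- Multi-storage objective equivalence under complementarity
`p⁺ t * p⁻ t = 0`: the objective equals the aggregate SoC increments over
deficiency periods, and the total unserved energy differs from `V(S)` by the
fixed constant `∑_{t : p⁻ t > 0} p⁻ t`. -/
theorem objective_eq_deficiency_sum_multi (T N : ℕ) (pp pm : Fin T → ℝ)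
    (hpp : ∀ t, 0 ≤ pp t) (hpm : ∀ t, 0 ≤ pm t)
    (hcompl : ∀ t, pp t * pm t = 0)
    (S0 Sb xb : Fin N → ℝ) (S : Fin N → Fin (T + 1) → ℝ)
    (hS : FeasibleM T N pp pm S0 Sb xb S) :
    (∑ t : Fin T, min 0 (∑ i, (S i t.succ - S i t.castSucc))) =
      (∑ t ∈ Finset.univ.filter (fun t : Fin T => 0 < pm t),
        ∑ i, (S i t.succ - S i t.castSucc)) ∧
    (∑ t ∈ Finset.univ.filter (fun t : Fin T => 0 < pm t),
        (pm t - ∑ i, (S i t.castSucc - S i t.succ))) =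
      (∑ t ∈ Finset.univ.filter (fun t : Fin T => 0 < pm t), pm t) +
        VM T N S := by
  have hfirst : (∑ t : Fin T, min 0 (∑ i, (S i t.succ - S i t.castSucc))) =
      ∑ t ∈ Finset.univ.filter (fun t : Fin T => 0 < pm t),
        ∑ i, (S i t.succ - S i t.castSucc) := by
    rw [Finset.sum_filter]
    refine Finset.sum_congr rfl fun t _ => ?_
    obtain ⟨hlo, hhi⟩ := hS.2.2 t
    split_ifs with h
    · have hpp0 : pp t = 0 := (mul_eq_zero.mp (hcompl t)).resolve_right h.ne'
      exact min_eq_right (hhi.trans hpp0.le)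
    · have hpm0 : pm t = 0 := le_antisymm (not_lt.mp h) (hpm t)
      exact min_eq_left (by linarith)
  refine ⟨hfirst, ?_⟩
  rw [VM, hfirst, ← Finset.sum_add_distrib]
  refine Finset.sum_congr rfl fun t _ => ?_
  simp only [Finset.sum_sub_distrib]
  ring
end
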